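/- Let n ≥ 1. If A ⊆ P([n]) with |A| = α·2^n, then the vertex-boundary of A in the hypercube Q_n satisfies |b(A)| ≥ √2·α(1-α)·2^n/√n. -/

import Mathlib

/-! Let `h x` count the neighbours outside a family `𝒜` of a vertex `x ∈ 𝒜` of the `n`-cube.
Induction on `n` gives Talagrand's inequality `∑ x ∈ 𝒜, √(h x) ≥ √3 α (1 - α) 2 ^ n`, where
`|𝒜| = α 2 ^ n`: split the cube along a coordinate into halves in which `𝒜` has `b ≥ c` members. At
least `b - c` members of the larger half have their neighbour in the other half outside `𝒜`, so by
Minkowski's inequality the sum over the larger half is at least `√(F ^ 2 + (b - c) ^ 2)`, where `F`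
is the same sum taken within that half; this makes up for the strict concavity of `t (1 - t)`.
Now take for `𝒜` the complement of `A`: the summands vanish off the vertex-boundary of `A` and are
at most `√n` on it. -/

section

open Finset Real
open scoped symmDiff

theorem sqrt_sum_sq_add_sum_sq_le {κ : Type*} (s : Finset κ) (u v : κ → ℝ) :
    √((∑ i ∈ s, u i) ^ 2 + (∑ i ∈ s, v i) ^ 2) ≤ ∑ i ∈ s, √(u i ^ 2 + v i ^ 2) := by
  simpa only [sum_add_distrib, ← sum_mul, ← Complex.ofReal_sum, Complex.norm_add_mul_I] using
    norm_sum_le s fun i ↦ (u i : ℂ) + v i * Complex.I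

theorem sqrt_sum_sqrt_sq_add_card_sub_sq_le {κ : Type*} [DecidableEq κ] {s t : Finset κ}
    (hts : #t ≤ #s) (d : κ → ℕ) :
    √((∑ x ∈ s, √(d x)) ^ 2 + ((#s : ℝ) - #t) ^ 2) ≤
      ∑ x ∈ s, √(d x + if x ∈ t then 0 else 1 : ℕ) := by
  have sum_ite_eq_card_sdiff : ∑ x ∈ s, (if x ∈ t then 0 else 1 : ℝ) = #(s \ t) := by
    rw [sdiff_eq_filter, card_filter]
    push_cast
    simp only [ite_not]
  have card_sub_le : (#s : ℝ) - #t ≤ #(s \ t) := by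
    rw [sub_le_iff_le_add]
    exact_mod_cast tsub_le_iff_right.mp (le_card_sdiff t s)
  have card_sub_nonneg : 0 ≤ (#s : ℝ) - #t := sub_nonneg.mpr (by exact_mod_cast hts)
  calc √((∑ x ∈ s, √(d x)) ^ 2 + ((#s : ℝ) - #t) ^ 2)
      ≤ √((∑ x ∈ s, √(d x)) ^ 2 + (∑ x ∈ s, (if x ∈ t then 0 else 1 : ℝ)) ^ 2) := by
        rw [sum_ite_eq_card_sdiff]; gcongr
    _ ≤ ∑ x ∈ s, √(√(d x) ^ 2 + (if x ∈ t then 0 else 1 : ℝ) ^ 2) :=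
        sqrt_sum_sq_add_sum_sq_le _ _ _
    _ = ∑ x ∈ s, √(d x + if x ∈ t then 0 else 1 : ℕ) := by
        refine sum_congr rfl fun x _ ↦ ?_
        rw [sq_sqrt (Nat.cast_nonneg _)]
        split_ifs <;> simp

/-- The lower bound `√3 α (1 - α) N` in Talagrand's inequality for a family of `t = α N` vertices of
a cube with `N` vertices. -/
noncomputable def talagrandProfile (N t : ℝ) : ℝ := √3 * (t * (N - t)) / N

theorem talagrandProfile_nonneg {N t : ℝ} (ht : 0 ≤ t) (htN : t ≤ N) :
    0 ≤ talagrandProfile N t :=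
  div_nonneg (mul_nonneg (sqrt_nonneg 3) (mul_nonneg ht (sub_nonneg.mpr htN))) (ht.trans htN)

theorem talagrandProfile_sub (N t : ℝ) : talagrandProfile N (N - t) = talagrandProfile N t := by
  rw [talagrandProfile, talagrandProfile, sub_sub_cancel, mul_comm (N - t)]

theorem talagrandProfile_two_mul_add {N : ℝ} (hN : N ≠ 0) (b c : ℝ) :
    talagrandProfile (2 * N) (b + c) =
      talagrandProfile N b + √3 * (b - c) ^ 2 / (2 * N) + talagrandProfile N c := by
  unfold talagrandProfile
  field_simp
  ring

theorem talagrandProfile_add_le_sqrt {N b c : ℝ} (hN : 0 < N) (hc : 0 ≤ c) (hcb : c ≤ b) :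
    talagrandProfile N b + √3 * (b - c) ^ 2 / (2 * N) ≤
      √(talagrandProfile N b ^ 2 + (b - c) ^ 2) := by
  have sq_le : (b - c) ^ 2 ≤ b ^ 2 :=
    pow_le_pow_left₀ (sub_nonneg.mpr hcb) (sub_le_self b hc) 2
  -- The `√3` in `talagrandProfile` comes from here: equality holds at `b = 2 * N / 3`, `c = 0`.
  have coefficient_le : 3 * (b * (N - b)) + 3 / 4 * (b - c) ^ 2 ≤ N ^ 2 := by
    linarith [sq_nonneg (N - 3 / 2 * b)]
  apply le_sqrt_of_sq_le
  calc (talagrandProfile N b + √3 * (b - c) ^ 2 / (2 * N)) ^ 2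
      = talagrandProfile N b ^ 2 +
          (b - c) ^ 2 * ((√3 ^ 2 * (b * (N - b)) + √3 ^ 2 / 4 * (b - c) ^ 2) / N ^ 2) := by
        unfold talagrandProfile
        field_simp
        ring
    _ ≤ talagrandProfile N b ^ 2 + (b - c) ^ 2 * 1 := by
        rw [sq_sqrt zero_le_three]
        gcongr
        exact div_le_one_of_le₀ coefficient_le (sq_nonneg N)
    _ = talagrandProfile N b ^ 2 + (b - c) ^ 2 := by rw [mul_one]

variable {ι : Type*} {S : Finset ι} {𝒜 : Finset (Finset ι)}

theorem card_le_two_pow_of_subset_powerset (h𝒜 : 𝒜 ⊆ S.powerset) : (#𝒜 : ℝ) ≤ 2 ^ #S := by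
  exact_mod_cast (card_le_card h𝒜).trans_eq (card_powerset S)

theorem mul_one_sub_nonneg_of_card_eq (h𝒜 : 𝒜 ⊆ S.powerset) {α : ℝ}
    (hα : (#𝒜 : ℝ) = α * 2 ^ #S) : 0 ≤ α * (1 - α) := by
  have two_pow_pos : (0 : ℝ) < 2 ^ #S := by positivity
  have nonneg : 0 ≤ α := nonneg_of_mul_nonneg_left (hα ▸ Nat.cast_nonneg _) two_pow_pos
  have le_one : α ≤ 1 := (mul_le_iff_le_one_left two_pow_pos).mp
    (hα ▸ card_le_two_pow_of_subset_powerset h𝒜)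
  exact mul_nonneg nonneg (sub_nonneg.mpr le_one)

variable [DecidableEq ι] {ℬ 𝒞 : Finset (Finset ι)} {a : ι} {x : Finset ι}

/-- The number of neighbours of `x` outside `𝒜` in the cube with vertex set `S.powerset`, whose
edges join `x` to `x ∆ {i}` for `i ∈ S`. -/
def exitDegree (S : Finset ι) (𝒜 : Finset (Finset ι)) (x : Finset ι) : ℕ :=
  #{i ∈ S | x ∆ {i} ∉ 𝒜}

/-- The left-hand side `∑ x ∈ 𝒜, √(h x)` of Talagrand's inequality, where `h` is the exit degree. -/
noncomputable def sqrtExitSum (S : Finset ι) (𝒜 : Finset (Finset ι)) : ℝ :=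
  ∑ x ∈ 𝒜, √(exitDegree S 𝒜 x)

/-- The contribution to `sqrtExitSum` of a half-cube on `S` that a family meets in `ℬ`, when the
family meets the opposite half-cube in `𝒞`: every `x ∈ ℬ \ 𝒞` has one extra neighbour outside. -/
noncomputable def halfSqrtExitSum (S : Finset ι) (ℬ 𝒞 : Finset (Finset ι)) : ℝ :=
  ∑ x ∈ ℬ, √(exitDegree S ℬ x + if x ∈ 𝒞 then 0 else 1 : ℕ)

theorem symmDiff_singleton_of_notMem (hx : a ∉ x) : x ∆ {a} = insert a x := by
  rw [(disjoint_singleton_right.mpr hx).symmDiff_eq_sup, sup_eq_union, union_singleton]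

theorem insert_symmDiff_singleton_self (hx : a ∉ x) : (insert a x) ∆ {a} = x := by
  rw [← symmDiff_singleton_of_notMem hx, symmDiff_symmDiff_cancel_right]

theorem insert_symmDiff_singleton_of_ne {i : ι} (hx : a ∉ x) (hia : i ≠ a) :
    (insert a x) ∆ {i} = insert a (x ∆ {i}) := by
  have ha : a ∉ x ∆ {i} := by simp [mem_symmDiff, hx, hia.symm]
  rw [← symmDiff_singleton_of_notMem hx, ← symmDiff_singleton_of_notMem ha, symmDiff_right_comm]

theorem exitDegree_insert (ha : a ∉ S) :
    exitDegree (insert a S) 𝒜 x = exitDegree S 𝒜 x + if x ∆ {a} ∈ 𝒜 then 0 else 1 := by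
  unfold exitDegree
  rw [filter_insert]
  split_ifs with h <;> simp_all

theorem exitDegree_nonMemberSubfamily (ha : a ∉ S) (hx : a ∉ x) :
    exitDegree S (𝒜.nonMemberSubfamily a) x = exitDegree S 𝒜 x := by
  unfold exitDegree
  congr 1
  refine filter_congr fun i hi ↦ ?_
  have hia : i ≠ a := ne_of_mem_of_not_mem hi ha
  simp [mem_nonMemberSubfamily, mem_symmDiff, hx, hia.symm]

theorem exitDegree_memberSubfamily (ha : a ∉ S) (hx : a ∉ x) :
    exitDegree S (𝒜.memberSubfamily a) x = exitDegree S 𝒜 (insert a x) := by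
  unfold exitDegree
  congr 1
  refine filter_congr fun i hi ↦ ?_
  have hia : i ≠ a := ne_of_mem_of_not_mem hi ha
  simp [mem_memberSubfamily, mem_symmDiff, hx, hia.symm, insert_symmDiff_singleton_of_ne hx hia]

theorem sum_nonMemberSubfamily_add_sum_memberSubfamily {M : Type*} [AddCommMonoid M] (a : ι)
    (𝒜 : Finset (Finset ι)) (f : Finset ι → M) :
    ∑ x ∈ 𝒜.nonMemberSubfamily a, f x + ∑ x ∈ 𝒜.memberSubfamily a, f (insert a x) =
      ∑ x ∈ 𝒜, f x := by
  have insert_injOn : Set.InjOn (insert a) (𝒜.memberSubfamily a : Set (Finset ι)) :=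
    (insert_erase_invOn (a := a)).2.injOn.mono fun x hx ↦
      (mem_memberSubfamily.mp (mem_coe.mp hx)).2
  rw [← sum_image insert_injOn, image_insert_memberSubfamily, nonMemberSubfamily, add_comm,
    sum_filter_add_sum_filter_not]

theorem sqrtExitSum_insert (ha : a ∉ S) :
    sqrtExitSum (insert a S) 𝒜 =
      halfSqrtExitSum S (𝒜.nonMemberSubfamily a) (𝒜.memberSubfamily a) +
        halfSqrtExitSum S (𝒜.memberSubfamily a) (𝒜.nonMemberSubfamily a) := by
  rw [sqrtExitSum, ← sum_nonMemberSubfamily_add_sum_memberSubfamily a]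
  congr 1 <;> refine sum_congr rfl fun x hx ↦ ?_
  · have hax : a ∉ x := (mem_nonMemberSubfamily.mp hx).2
    simp only [exitDegree_insert ha, exitDegree_nonMemberSubfamily ha hax,
      symmDiff_singleton_of_notMem hax, mem_memberSubfamily, hax, not_false_eq_true, and_true]
  · have hax : a ∉ x := (mem_memberSubfamily.mp hx).2
    simp only [exitDegree_insert ha, exitDegree_memberSubfamily ha hax,
      insert_symmDiff_singleton_self hax, mem_nonMemberSubfamily, hax, not_false_eq_true, and_true]

theorem sqrtExitSum_le_halfSqrtExitSum : sqrtExitSum S ℬ ≤ halfSqrtExitSum S ℬ 𝒞 :=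
  sum_le_sum fun _ _ ↦ sqrt_le_sqrt (Nat.cast_le.mpr (Nat.le_add_right _ _))

theorem talagrandProfile_le_halfSqrtExitSum_add {N : ℝ} (hN : 0 < N) (hℬN : #ℬ ≤ N)
    (h𝒞ℬ : #𝒞 ≤ #ℬ) (hℬ : talagrandProfile N #ℬ ≤ sqrtExitSum S ℬ)
    (h𝒞 : talagrandProfile N #𝒞 ≤ sqrtExitSum S 𝒞) :
    talagrandProfile (2 * N) (#ℬ + #𝒞) ≤ halfSqrtExitSum S ℬ 𝒞 + halfSqrtExitSum S 𝒞 ℬ := by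
  have larger_half :
      talagrandProfile N #ℬ + √3 * ((#ℬ : ℝ) - #𝒞) ^ 2 / (2 * N) ≤ halfSqrtExitSum S ℬ 𝒞 :=
    calc _ ≤ √(talagrandProfile N #ℬ ^ 2 + ((#ℬ : ℝ) - #𝒞) ^ 2) :=
          talagrandProfile_add_le_sqrt hN (Nat.cast_nonneg _) (Nat.cast_le.mpr h𝒞ℬ)
      _ ≤ √(sqrtExitSum S ℬ ^ 2 + ((#ℬ : ℝ) - #𝒞) ^ 2) := by
          gcongr
          exact talagrandProfile_nonneg (Nat.cast_nonneg _) hℬN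
      _ ≤ halfSqrtExitSum S ℬ 𝒞 := sqrt_sum_sqrt_sq_add_card_sub_sq_le h𝒞ℬ _
  rw [talagrandProfile_two_mul_add hN.ne']
  exact add_le_add larger_half (h𝒞.trans sqrtExitSum_le_halfSqrtExitSum)

theorem nonMemberSubfamily_subset_powerset (h𝒜 : 𝒜 ⊆ (insert a S).powerset) :
    𝒜.nonMemberSubfamily a ⊆ S.powerset := by
  intro x hx
  obtain ⟨hx, hax⟩ := mem_nonMemberSubfamily.mp hx
  exact mem_powerset.mpr ((subset_insert_iff_of_notMem hax).mp (mem_powerset.mp (h𝒜 hx)))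

theorem memberSubfamily_subset_powerset (h𝒜 : 𝒜 ⊆ (insert a S).powerset) :
    𝒜.memberSubfamily a ⊆ S.powerset := by
  intro x hx
  obtain ⟨hx, hax⟩ := mem_memberSubfamily.mp hx
  exact mem_powerset.mpr ((insert_subset_insert_iff hax).mp (mem_powerset.mp (h𝒜 hx)))

theorem talagrandProfile_le_sqrtExitSum (h𝒜 : 𝒜 ⊆ S.powerset) :
    talagrandProfile (2 ^ #S) #𝒜 ≤ sqrtExitSum S 𝒜 := by
  induction S using Finset.induction_on generalizing 𝒜 with
  | empty =>
    obtain rfl | rfl := subset_singleton_iff.mp (powerset_empty ▸ h𝒜) <;>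
      simp [talagrandProfile, sqrtExitSum, exitDegree]
  | insert a S ha ih =>
    have h₀ := nonMemberSubfamily_subset_powerset h𝒜
    have h₁ := memberSubfamily_subset_powerset h𝒜
    have hN : (0 : ℝ) < 2 ^ #S := by positivity
    rw [sqrtExitSum_insert ha, card_insert_of_notMem ha, pow_succ',
      ← card_memberSubfamily_add_card_nonMemberSubfamily a 𝒜, Nat.cast_add]
    obtain h | h := le_total #(𝒜.memberSubfamily a) #(𝒜.nonMemberSubfamily a)
    · rw [add_comm (#(𝒜.memberSubfamily a) : ℝ)]
      exact talagrandProfile_le_halfSqrtExitSum_add hN (card_le_two_pow_of_subset_powerset h₀) h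
        (ih h₀) (ih h₁)
    · rw [add_comm (halfSqrtExitSum _ _ _)]
      exact talagrandProfile_le_halfSqrtExitSum_add hN (card_le_two_pow_of_subset_powerset h₁) h
        (ih h₁) (ih h₀)

/-- The vertex-boundary of `𝒜` in the cube with vertex set `S.powerset`. -/
def vertexBoundary (S : Finset ι) (𝒜 : Finset (Finset ι)) : Finset (Finset ι) :=
  {x ∈ S.powerset | x ∉ 𝒜 ∧ ∃ y ∈ 𝒜, #(x ∆ y) = 1}

theorem vertexBoundary_subset_sdiff : vertexBoundary S 𝒜 ⊆ S.powerset \ 𝒜 := by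
  intro x hx
  obtain ⟨hxS, hx𝒜, -⟩ := mem_filter.mp hx
  exact mem_sdiff.mpr ⟨hxS, hx𝒜⟩

theorem exitDegree_sdiff_eq_zero (hx : x ∈ S.powerset \ 𝒜) (hxb : x ∉ vertexBoundary S 𝒜) :
    exitDegree S (S.powerset \ 𝒜) x = 0 := by
  obtain ⟨hxS, hx𝒜⟩ := mem_sdiff.mp hx
  refine card_eq_zero.mpr (filter_eq_empty_iff.mpr fun i hi ↦ not_not.mpr (mem_sdiff.mpr ⟨?_, ?_⟩))
  · exact mem_powerset.mpr <|
      symmDiff_le_sup.trans (union_subset (mem_powerset.mp hxS) (singleton_subset_iff.mpr hi))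
  · intro hxi
    exact hxb (mem_filter.mpr ⟨hxS, hx𝒜, x ∆ {i}, hxi, by simp⟩)

theorem sqrtExitSum_sdiff_le :
    sqrtExitSum S (S.powerset \ 𝒜) ≤ #(vertexBoundary S 𝒜) * √(#S) :=
  calc sqrtExitSum S (S.powerset \ 𝒜)
      = ∑ x ∈ vertexBoundary S 𝒜, √(exitDegree S (S.powerset \ 𝒜) x) := by
        refine (sum_subset vertexBoundary_subset_sdiff fun x hx hxb ↦ ?_).symm
        rw [exitDegree_sdiff_eq_zero hx hxb, Nat.cast_zero, sqrt_zero]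
    _ ≤ ∑ _x ∈ vertexBoundary S 𝒜, √(#S) :=
        sum_le_sum fun _ _ ↦ sqrt_le_sqrt (Nat.cast_le.mpr (card_filter_le _ _))
    _ = #(vertexBoundary S 𝒜) * √(#S) := by rw [sum_const, nsmul_eq_mul]

theorem talagrandProfile_le_card_vertexBoundary_mul_sqrt (h𝒜 : 𝒜 ⊆ S.powerset) :
    talagrandProfile (2 ^ #S) #𝒜 ≤ #(vertexBoundary S 𝒜) * √(#S) := by
  have card_compl : (#(S.powerset \ 𝒜) : ℝ) = 2 ^ #S - #𝒜 := by
    rw [cast_card_sdiff h𝒜, card_powerset, Nat.cast_pow, Nat.cast_ofNat]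
  calc talagrandProfile (2 ^ #S) #𝒜
      = talagrandProfile (2 ^ #S) #(S.powerset \ 𝒜) := by rw [card_compl, talagrandProfile_sub]
    _ ≤ sqrtExitSum S (S.powerset \ 𝒜) := talagrandProfile_le_sqrtExitSum sdiff_subset
    _ ≤ #(vertexBoundary S 𝒜) * √(#S) := sqrtExitSum_sdiff_le

theorem stmt_1_general (hS : S.Nonempty) (h𝒜 : 𝒜 ⊆ S.powerset) {α : ℝ}
    (hα : (#𝒜 : ℝ) = α * 2 ^ #S) :
    √3 * (α * (1 - α)) * 2 ^ #S / √(#S) ≤ #(vertexBoundary S 𝒜) := by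
  have sqrt_card_pos : 0 < √(#S) := sqrt_pos.mpr (Nat.cast_pos.mpr hS.card_pos)
  rw [div_le_iff₀ sqrt_card_pos]
  calc √3 * (α * (1 - α)) * 2 ^ #S = talagrandProfile (2 ^ #S) #𝒜 := by
        rw [talagrandProfile, hα]
        field_simp
    _ ≤ #(vertexBoundary S 𝒜) * √(#S) := talagrandProfile_le_card_vertexBoundary_mul_sqrt h𝒜

end

/-- **An approximate vertex-isoperimetric inequality for the hypercube `Q_n`.**
If `A ⊆ P([n])` with `|A| = α·2^n`, then the vertex-boundary of `A` in `Q_n`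
(where `x ~ y` iff `|x Δ y| = 1`) satisfies `|b(A)| ≥ √2·α(1-α)·2^n/√n`. -/
theorem stmt_1 (n : ℕ) (hn : 1 ≤ n)
    (A : Finset (Finset ℕ))
    (hA : A ⊆ (Finset.Icc 1 n).powerset)
    (α : ℝ) (hα : (A.card : ℝ) = α * 2 ^ n) :
    ((((Finset.Icc 1 n).powerset).filter
        (fun x => x ∉ A ∧ ∃ y ∈ A, (symmDiff x y).card = 1)).card : ℝ)
      ≥ Real.sqrt 2 * (α * (1 - α)) * 2 ^ n / Real.sqrt (n : ℝ) := by
  have hcard : (Finset.Icc 1 n).card = n := by simp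
  have hα' : (A.card : ℝ) = α * 2 ^ (Finset.Icc 1 n).card := by rw [hcard, hα]
  have hnonneg : 0 ≤ α * (1 - α) := mul_one_sub_nonneg_of_card_eq hA hα'
  calc Real.sqrt 2 * (α * (1 - α)) * 2 ^ n / Real.sqrt n
      ≤ Real.sqrt 3 * (α * (1 - α)) * 2 ^ n / Real.sqrt n := by gcongr; norm_num
    _ ≤ (vertexBoundary (Finset.Icc 1 n) A).card := by
        simpa only [hcard] using stmt_1_general (Finset.nonempty_Icc.mpr hn) hA hα'
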